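/- Consider the Hamiltonian system q̇ = p/√(1 + |p|²), ṗ = −∇Φ(t,q) − ∂ₜA(t,q) + q̇ × (∇×A)(t,q), where A ∈ C¹(ℝ⁴;ℝ³) and Φ is C¹ with C := max{‖∂ₜA‖_∞, ‖∇A‖_∞, ‖∇Φ‖_∞} < ∞. Then every T-periodic solution (q,p) satisfies |q̇(t)| ≤ TC/√(1 + T²C²) < 1 for all t. -/

import Mathlib

noncomputable section

/-- Cross product on `ℝ³` (with the Euclidean norm). -/
def cross3 (u v : EuclideanSpace ℝ (Fin 3)) : EuclideanSpace ℝ (Fin 3) :=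
  (WithLp.equiv 2 (Fin 3 → ℝ)).symm
    ![u 1 * v 2 - u 2 * v 1, u 2 * v 0 - u 0 * v 2, u 0 * v 1 - u 1 * v 0]

/-- Curl of a vector field on `ℝ³`. -/
def curl3 (A : EuclideanSpace ℝ (Fin 3) → EuclideanSpace ℝ (Fin 3))
    (x : EuclideanSpace ℝ (Fin 3)) : EuclideanSpace ℝ (Fin 3) :=
  (WithLp.equiv 2 (Fin 3 → ℝ)).symm
    ![fderiv ℝ A x (EuclideanSpace.single 1 1) 2 - fderiv ℝ A x (EuclideanSpace.single 2 1) 1,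
      fderiv ℝ A x (EuclideanSpace.single 2 1) 0 - fderiv ℝ A x (EuclideanSpace.single 0 1) 2,
      fderiv ℝ A x (EuclideanSpace.single 0 1) 1 - fderiv ℝ A x (EuclideanSpace.single 1 1) 0]

lemma linear_barrier_ineq {c s m ρ : ℝ} (hc : 0 < c) (hs : 0 ≤ s) (h1 : c ^ 2 + s ^ 2 = 1)
    (hρm : ρ ≤ m) (hm0 : 0 ≤ m) (hm : m ≤ 1) (h : 3 / 5 * c ≤ 1 - s) :
    (4 / 5 + 2 / 5 * ρ * c) * (1 + m * s) ≤ 1 + m * c := by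
  have h2 : 3 / 5 * (1 + s) ≤ c := by
    refine le_of_mul_le_mul_left ?_ hc
    nlinarith [mul_le_mul_of_nonneg_right h (by linarith : 0 ≤ 1 + s)]
  have hs2 : s ≤ 1 / 2 := by linarith
  have hc2 : 17 / 20 ≤ c := by nlinarith
  have h3 : ρ * c ≤ m * c := by gcongr
  have h4 : m * s ≤ m * (1 / 2) := by gcongr
  have h5 : 0 ≤ m * c := by positivity
  have h6 : 0 ≤ m * s := by positivity
  calc (4 / 5 + 2 / 5 * ρ * c) * (1 + m * s)
      ≤ (4 / 5 + 2 / 5 * (m * c)) * (1 + m * s) := by gcongr ?_ * _; linarith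
    _ ≤ (4 / 5 + 2 / 5 * (m * c)) * (1 + m * (1 / 2)) := by gcongr
    _ ≤ 1 + m * c := by nlinarith [mul_nonneg h5 (sub_nonneg.2 hm)]

lemma conic_barrier_ineq {c s m ρ : ℝ} (hc : 0 ≤ c) (hs : 0 ≤ s) (h1 : c ^ 2 + s ^ 2 = 1)
    (hρm : ρ ≤ m) (hm0 : 0 ≤ m) (hm : m ≤ 1)
    (h : 1 + c - s ≤ 8 / 5 * c + 2 / 5 * c ^ 2 * ρ) :
    √(3 + 2 * (c - s)) ≤ 2 + m * (c - s) := by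
  have hd1 : -1 ≤ c - s := by nlinarith
  have hc1 : c ≤ 1 := by nlinarith
  rw [Real.sqrt_le_left (by nlinarith)]
  obtain ⟨d, hd⟩ : ∃ d, d = c - s := ⟨_, rfl⟩
  rw [← hd] at hd1 ⊢
  rcases le_total d 0 with hd0 | hd0
  · nlinarith [mul_nonneg (sub_nonneg.2 hm) (neg_nonneg.2 hd0), sq_nonneg (1 + d),
      mul_nonneg (mul_nonneg (sub_nonneg.2 hm) (neg_nonneg.2 hd0)) (by nlinarith : 0 ≤ 4 + (1 + m) * d)]
  rcases le_total d (1 / 2) with hd2 | hd2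
  · nlinarith [mul_nonneg hm0 hd0, sq_nonneg (m * d)]
  have hd3 : d ≤ 1 := by linarith
  have h' : 1 - s ≤ (3 / 5 + 2 / 5 * m) * c := by
    have : c ^ 2 * ρ ≤ c * m := by
      calc c ^ 2 * ρ ≤ c ^ 2 * m := by gcongr
        _ ≤ c * m := by gcongr; nlinarith
    nlinarith
  have hcpos : 0 < c := by linarith
  have h'' : c ≤ (3 / 5 + 2 / 5 * m) * (1 + s) := by
    refine le_of_mul_le_mul_left ?_ hcpos
    nlinarith [mul_le_mul_of_nonneg_right h' (by linarith : 0 ≤ 1 + s)]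
  rcases le_total (1 / 4) m with hm4 | hm4
  · nlinarith [sq_nonneg (m * d)]
  have hs1 : s ≤ 0.412 := by nlinarith
  have hcl : 0.911 ≤ c := by nlinarith
  have hm1 : 1 / 10 ≤ m := by nlinarith
  have hd6 : d ≤ 0.61 := by
    have : c ≤ 0.7 * (1 + s) := by nlinarith
    nlinarith
  nlinarith [sq_nonneg (m * d)]

lemma min_le_min_of_active_deriv_nonneg {f g f' g' : ℝ → ℝ} {a b : ℝ} (hab : a ≤ b)
    (hf : ContinuousOn f (Set.Icc a b)) (hg : ContinuousOn g (Set.Icc a b))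
    (hf' : ∀ t ∈ Set.Ico a b, f t ≤ g t → HasDerivAt f (f' t) t ∧ 0 ≤ f' t)
    (hg' : ∀ t ∈ Set.Ico a b, g t ≤ f t → HasDerivAt g (g' t) t ∧ 0 ≤ g' t) :
    min (f a) (g a) ≤ min (f b) (g b) := by
  by_contra! hlt
  obtain ⟨ε, hε, hεlt⟩ : ∃ ε > 0, min (f b) (g b) + ε * (b - a) < min (f a) (g a) := by
    have hne : 0 < b - a + 1 := by linarith
    refine ⟨(min (f a) (g a) - min (f b) (g b)) / (b - a + 1), by apply div_pos <;> linarith, ?_⟩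
    have := div_mul_cancel₀ (min (f a) (g a) - min (f b) (g b)) hne.ne'
    have h2 : 0 < (min (f a) (g a) - min (f b) (g b)) / (b - a + 1) := by
      apply div_pos <;> linarith
    nlinarith
  set G : ℝ → ℝ := fun t => min (f t) (g t) + ε * (t - a) with hG
  have hGc : ContinuousOn G (Set.Icc a b) := by
    simp only [hG]
    exact (ContinuousOn.inf hf hg).add (by fun_prop)
  obtain ⟨t, ht, hmax⟩ := isCompact_Icc.exists_isMaxOn (Set.nonempty_Icc.2 hab) hGc
  have htb : t < b := by
    refine lt_of_le_of_ne ht.2 fun h => ?_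
    have := hmax (Set.left_mem_Icc.2 hab)
    simp only [hG, h, Set.mem_ofPred_eq] at this
    linarith
  have key : ∀ k l k' : ℝ → ℝ, ContinuousOn k (Set.Icc a b) → (∀ r, G r = min (k r) (l r) + ε * (r - a)) →
      (k t ≤ l t → HasDerivAt k (k' t) t ∧ 0 ≤ k' t) →
      ∀ᶠ r in nhdsWithin t (Set.Ioi t), G t < k r + ε * (r - a) := by
    intro k l k' hk hkl hd
    rcases le_or_gt (k t) (l t) with h | h
    · obtain ⟨h1, h2⟩ := hd h
      have h3 : HasDerivAt (fun r => k r + ε * (r - a)) (k' t + ε) t := by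
        have := h1.fun_add (((hasDerivAt_id t).sub_const a).const_mul ε)
        simpa using this
      have h4 := h3.hasDerivWithinAt (s := Set.Ioi t)
      rw [hasDerivWithinAt_iff_tendsto_slope' (by simp)] at h4
      filter_upwards [h4.eventually (lt_mem_nhds (by linarith : (0 : ℝ) < k' t + ε)),
        self_mem_nhdsWithin] with r hr hrt
      rw [slope_def_field, div_pos_iff_of_pos_right (sub_pos.2 hrt)] at hr
      rw [hkl, min_eq_left h]
      linarith
    · have h3 : ContinuousWithinAt (fun r => k r + ε * (r - a)) (Set.Ioi t) t := by
        refine ContinuousWithinAt.add ?_ (by fun_prop)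
        exact ((hk t ht).mono_of_mem_nhdsWithin
          (Filter.mem_of_superset (Ioc_mem_nhdsGT htb) fun r hr => ⟨ht.1.trans hr.1.le, hr.2⟩))
      refine h3.eventually (lt_mem_nhds ?_)
      rw [hkl, min_eq_right h.le]
      linarith
  have e1 := key f g f' hf (fun _ => rfl) (hf' t ⟨ht.1, htb⟩)
  have e2 := key g f g' hg (fun r => by simp only [hG, min_comm]) (hg' t ⟨ht.1, htb⟩)
  obtain ⟨r, ⟨hr1, hr2⟩, hr⟩ := ((e1.and e2).and (Ioc_mem_nhdsGT htb)).exists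
  have := hmax (⟨ht.1.trans hr.1.le, hr.2⟩ : r ∈ Set.Icc a b)
  simp only [Set.mem_ofPred_eq] at this
  have h5 : G t < G r := by
    simp only [hG] at hr1 hr2 ⊢
    rcases min_choice (f r) (g r) with h | h <;> rw [h] <;> assumption
  linarith

lemma norm_adjoint_sub_le {E : Type*} [NormedAddCommGroup E] [InnerProductSpace ℝ E]
    [CompleteSpace E] (L : E →L[ℝ] E) (v : E) {C : ℝ} (hL : ‖L‖ ≤ C) :
    ‖ContinuousLinearMap.adjoint L v - L v‖ ≤ 2 * C * ‖v‖ := by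
  have h1 := (ContinuousLinearMap.adjoint L).le_opNorm v
  rw [LinearIsometryEquiv.norm_map] at h1
  have h2 := L.le_opNorm v
  have h3 := norm_sub_le (ContinuousLinearMap.adjoint L v) (L v)
  nlinarith [mul_le_mul_of_nonneg_right hL (norm_nonneg v)]

section Barrier

variable {E : Type*} [NormedAddCommGroup E] [InnerProductSpace ℝ E]

lemma inner_sq_le_norm_sq (P : E) {u : E} (hu : ‖u‖ = 1) : inner ℝ P u ^ 2 ≤ ‖P‖ ^ 2 := by
  have := abs_real_inner_le_norm P u
  rw [hu, mul_one] at this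
  exact sq_le_sq.2 (by rwa [abs_of_nonneg (norm_nonneg P)])

lemma norm_mul_inner_le_of_inner_eq_zero {P b u : E} (hu : ‖u‖ = 1) (hbP : inner ℝ b P = 0) :
    ‖P‖ * |inner ℝ b u| ≤ ‖b‖ * √(‖P‖ ^ 2 - inner ℝ P u ^ 2) := by
  set x := inner ℝ P u with hx
  set r := ‖P‖ with hr
  have hrx : 0 ≤ r ^ 2 - x ^ 2 := sub_nonneg.2 (inner_sq_le_norm_sq P hu)
  have h1 : inner ℝ b (r ^ 2 • u - x • P) = r ^ 2 * inner ℝ b u := by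
    rw [inner_sub_right, inner_smul_right, inner_smul_right, hbP]; ring
  have h2 : ‖r ^ 2 • u - x • P‖ = r * √(r ^ 2 - x ^ 2) := by
    rw [← sq_eq_sq₀ (norm_nonneg _) (by positivity), mul_pow, Real.sq_sqrt hrx,
      norm_sub_sq_real, norm_smul, norm_smul, inner_smul_left, inner_smul_right,
      real_inner_comm, ← hx, hu, ← hr, Real.norm_eq_abs, Real.norm_eq_abs, mul_pow, mul_pow,
      sq_abs, sq_abs]
    simp
    ring
  have h3 := abs_real_inner_le_norm b (r ^ 2 • u - x • P)
  rw [h1, h2, abs_mul, abs_of_nonneg (by positivity)] at h3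
  rcases (norm_nonneg P).eq_or_lt with h0 | h0
  · rw [hr, ← h0, zero_mul]; positivity
  · refine le_of_mul_le_mul_left ?_ h0
    calc r * (r * |inner ℝ b u|) = r ^ 2 * |inner ℝ b u| := by ring
      _ ≤ _ := h3
      _ = _ := by ring

lemma linear_barrier_deriv_nonneg {P e b u : E} {C v m N : ℝ} (hC : 0 ≤ C) (hu : ‖u‖ = 1)
    (he : ‖e‖ ≤ 2 * C) (hbP : inner ℝ b P = 0) (hb : ‖b‖ ≤ 2 * C * v) (hvm : v ≤ m)
    (hm0 : 0 ≤ m) (hm : m ≤ 1) (hN : 0 < N) (hPN : ‖P‖ / N ≤ m) (hx : 0 < inner ℝ P u)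
    (h : 2 / 5 * inner ℝ P u + 1 / 10 * inner ℝ P u ^ 2 / N ≤
      (‖P‖ + inner ℝ P u - √(‖P‖ ^ 2 - inner ℝ P u ^ 2)) / 4) :
    0 ≤ (2 / 5 + 1 / 5 * inner ℝ P u / N) * inner ℝ (e + b) u +
      C * (1 + m * (inner ℝ P u / ‖P‖)) := by
  have hsin := norm_mul_inner_le_of_inner_eq_zero hu hbP
  have hxr := inner_sq_le_norm_sq P hu
  set x := inner ℝ P u
  have hP0 : P ≠ 0 := by rintro rfl; simp [x] at hx
  have hr : 0 < ‖P‖ := norm_pos_iff.2 hP0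
  set r := ‖P‖
  set c := x / r with hc
  set s := √(r ^ 2 - x ^ 2) / r with hs
  have hxc : x = r * c := by rw [hc]; field_simp
  have hys : √(r ^ 2 - x ^ 2) = r * s := by rw [hs]; field_simp
  have hs0 : 0 ≤ s := by positivity
  have hc0 : 0 < c := by positivity
  have h1 : c ^ 2 + s ^ 2 = 1 := by
    rw [hc, hs, div_pow, div_pow, Real.sq_sqrt (sub_nonneg.2 hxr)]; field_simp; ring
  have h35 : 3 / 5 * c ≤ 1 - s := by
    rw [hys] at h
    have : 0 ≤ 1 / 10 * x ^ 2 / N := by positivity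
    refine le_of_mul_le_mul_left ?_ hr
    nlinarith
  have key := linear_barrier_ineq hc0 hs0 h1 hPN hm0 hm h35
  have hbu : |inner ℝ b u| ≤ 2 * C * m * s := by
    rw [hys] at hsin
    have : |inner ℝ b u| ≤ ‖b‖ * s := le_of_mul_le_mul_left (by linarith) hr
    have h2 : ‖b‖ ≤ 2 * C * m := hb.trans (by gcongr)
    exact this.trans (by gcongr)
  have heu : |inner ℝ e u| ≤ 2 * C := by
    have := abs_real_inner_le_norm e u
    rw [hu, mul_one] at this
    exact this.trans he
  have hsum : -(2 * C * (1 + m * s)) ≤ inner ℝ (e + b) u := by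
    rw [inner_add_left]
    linarith [neg_abs_le (inner ℝ b u), neg_abs_le (inner ℝ e u)]
  have hφ : 2 / 5 + 1 / 5 * x / N = (4 / 5 + 2 / 5 * (r / N) * c) / 2 := by
    rw [hxc]; ring
  rw [hφ]
  have hφ0 : 0 ≤ (4 / 5 + 2 / 5 * (r / N) * c) / 2 := by positivity
  nlinarith [mul_le_mul_of_nonneg_left hsum hφ0, mul_le_mul_of_nonneg_left key hC]

lemma conic_barrier_deriv_nonneg {P e b u : E} {C v m N : ℝ} (hC : 0 ≤ C) (hu : ‖u‖ = 1)
    (he : ‖e‖ ≤ 2 * C) (hbP : inner ℝ b P = 0) (hb : ‖b‖ ≤ 2 * C * v) (hvm : v ≤ m)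
    (hm0 : 0 ≤ m) (hm : m ≤ 1) (hPN : ‖P‖ / N ≤ m) (hx : 0 < inner ℝ P u)
    (hy : 0 < √(‖P‖ ^ 2 - inner ℝ P u ^ 2))
    (h : (‖P‖ + inner ℝ P u - √(‖P‖ ^ 2 - inner ℝ P u ^ 2)) / 4 ≤
      2 / 5 * inner ℝ P u + 1 / 10 * inner ℝ P u ^ 2 / N) :
    0 ≤ (inner ℝ (e + b) P / ‖P‖ + inner ℝ (e + b) u -
        (inner ℝ (e + b) P - inner ℝ P u * inner ℝ (e + b) u) /
          √(‖P‖ ^ 2 - inner ℝ P u ^ 2)) / 4 +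
      C * (1 + m * (inner ℝ P u / ‖P‖)) := by
  have hsin := norm_mul_inner_le_of_inner_eq_zero hu hbP
  have hxr := inner_sq_le_norm_sq P hu
  have hPP : inner ℝ P P = ‖P‖ ^ 2 := real_inner_self_eq_norm_sq P
  have huu : inner ℝ u u = (1 : ℝ) := by rw [real_inner_self_eq_norm_sq, hu]; norm_num
  have hP0 : P ≠ 0 := by rintro rfl; simp at hx
  have hr : 0 < ‖P‖ := norm_pos_iff.2 hP0
  generalize hxdef : inner ℝ P u = x at h hy hx hxr hsin ⊢
  generalize ‖P‖ = r at h hy hr hPN hPP hxr hsin ⊢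
  set c := x / r with hc
  set s := √(r ^ 2 - x ^ 2) / r with hs
  have hxc : x = r * c := by rw [hc]; field_simp
  have hys : √(r ^ 2 - x ^ 2) = r * s := by rw [hs]; field_simp
  have hs0 : 0 < s := by positivity
  have hc0 : 0 < c := by positivity
  have h1 : c ^ 2 + s ^ 2 = 1 := by
    rw [hc, hs, div_pow, div_pow, Real.sq_sqrt (sub_nonneg.2 hxr)]; field_simp; ring
  have hact : 1 + c - s ≤ 8 / 5 * c + 2 / 5 * c ^ 2 * (r / N) := by
    rw [hys, hxc] at h
    refine le_of_mul_le_mul_left ?_ hr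
    have : 1 / 10 * (r * c) ^ 2 / N = r * (1 / 10 * c ^ 2 * (r / N)) := by ring
    rw [this] at h
    linarith
  have key := conic_barrier_ineq hc0.le hs0.le h1 hPN hm0 hm hact
  have hbu : |inner ℝ b u| ≤ 2 * C * m * s := by
    rw [hys] at hsin
    have : |inner ℝ b u| ≤ ‖b‖ * s := le_of_mul_le_mul_left (by linarith) hr
    have h2 : ‖b‖ ≤ 2 * C * m := hb.trans (by gcongr)
    exact this.trans (by gcongr)
  rw [hys]
  set G : E := ((1 - 1 / s) / r) • P + (1 + c / s) • u with hG
  have hGnorm : ‖G‖ = √(3 + 2 * (c - s)) := by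
    rw [← Real.sqrt_sq (norm_nonneg G), ← real_inner_self_eq_norm_sq, hG]
    congr 1
    simp only [inner_add_left, inner_add_right, real_inner_smul_left, real_inner_smul_right,
      hPP, huu, real_inner_comm P u, hxdef]
    rw [hxc]
    field_simp
    linear_combination (2 * s - 1) * h1
  have heG : -(2 * C * √(3 + 2 * (c - s))) ≤ inner ℝ e G := by
    have h2 := abs_real_inner_le_norm e G
    rw [hGnorm] at h2
    have h3 : ‖e‖ * √(3 + 2 * (c - s)) ≤ 2 * C * √(3 + 2 * (c - s)) := by gcongr
    linarith [neg_abs_le (inner ℝ e G)]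
  have hbG : -(2 * C * m * (s + c)) ≤ inner ℝ b G := by
    have h2 : inner ℝ b G = (1 + c / s) * inner ℝ b u := by
      rw [hG, inner_add_right, real_inner_smul_right, real_inner_smul_right, hbP]; ring
    have h3 : 2 * C * m * (s + c) = (1 + c / s) * (2 * C * m * s) := by field_simp
    have h4 : 0 ≤ 1 + c / s := by positivity
    rw [h2, h3]
    nlinarith [neg_abs_le (inner ℝ b u), mul_le_mul_of_nonneg_left hbu h4]
  have hsplit : inner ℝ (e + b) P / r + inner ℝ (e + b) u -
      (inner ℝ (e + b) P - x * inner ℝ (e + b) u) / (r * s) = inner ℝ e G + inner ℝ b G := by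
    rw [← inner_add_left, hG, inner_add_right, real_inner_smul_right, real_inner_smul_right, hxc]
    field_simp
    ring
  rw [hsplit]
  nlinarith [mul_le_mul_of_nonneg_left key hC]

lemma speed_ratio_bounds {r M : ℝ} (hr : 0 ≤ r) (hM : 0 < M) (hrM : r ≤ M) :
    r / M ≤ √(1 + M ^ 2) / M * (r / √(1 + r ^ 2)) ∧
      √(1 + M ^ 2) / M * (r / √(1 + r ^ 2)) ≤ 1 ∧
      r / √(1 + r ^ 2) ≤ √(1 + M ^ 2) / M * (r / √(1 + r ^ 2)) := by
  have h1 : 0 < √(1 + r ^ 2) := by positivity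
  have h2 : √(1 + r ^ 2) ≤ √(1 + M ^ 2) := by gcongr
  refine ⟨?_, ?_, ?_⟩
  · rw [div_mul_div_comm, div_le_div_iff₀ hM (by positivity)]
    nlinarith [mul_le_mul_of_nonneg_left h2 (by positivity : 0 ≤ r * M)]
  · rw [div_mul_div_comm, div_le_one (by positivity)]
    refine (sq_le_sq₀ (by positivity) (by positivity)).1 ?_
    rw [mul_pow, mul_pow, Real.sq_sqrt (by positivity), Real.sq_sqrt (by positivity)]
    nlinarith [pow_le_pow_left₀ hr hrM 2]
  · refine le_mul_of_one_le_left (by positivity) ?_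
    rw [one_le_div hM]
    exact Real.le_sqrt_of_sq_le (by linarith)

/-- If the momentum starts at `M • u` with `M` its maximal length and reaches the half-space
`⟪·, u⟫ ≤ 0`, then the elapsed time, corrected by the displacement along `u`, is at least
`M / (2 C)`. -/
lemma half_max_momentum_le {P Q e b : ℝ → E} {u : E} {C M t₀ t₁ : ℝ} (hC : 0 ≤ C) (hM : 0 < M)
    (hu : ‖u‖ = 1) (hP : ∀ t, HasDerivAt P (e t + b t) t)
    (hQ : ∀ t, HasDerivAt Q ((√(1 + ‖P t‖ ^ 2))⁻¹ • P t) t)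
    (he : ∀ t, ‖e t‖ ≤ 2 * C) (hbP : ∀ t, inner ℝ (b t) (P t) = 0)
    (hb : ∀ t, ‖b t‖ ≤ 2 * C * (‖P t‖ / √(1 + ‖P t‖ ^ 2)))
    (hPM : ∀ t, ‖P t‖ ≤ M) (h₀ : P t₀ = M • u) (h01 : t₀ ≤ t₁) (h₁ : inner ℝ (P t₁) u ≤ 0) :
    M / 2 ≤ C * (t₁ - t₀ + √(1 + M ^ 2) / M * (inner ℝ (Q t₁) u - inner ℝ (Q t₀) u)) := by
  set β := √(1 + M ^ 2) / M with hβ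
  set x : ℝ → ℝ := fun t => inner ℝ (P t) u with hxdef
  set m : ℝ → ℝ := fun t => β * (‖P t‖ / √(1 + ‖P t‖ ^ 2)) with hm
  have hm0 : ∀ t, 0 ≤ m t := fun t => by positivity
  have hmb := fun t => speed_ratio_bounds (norm_nonneg (P t)) hM (hPM t)
  have hxd : ∀ t, HasDerivAt x (inner ℝ (e t + b t) u) t := fun t => by
    simpa using (hP t).inner ℝ (hasDerivAt_const t u)
  set K : ℝ → ℝ := fun t => C * (t + β * inner ℝ (Q t) u) with hK
  have hKd : ∀ t, HasDerivAt K (C * (1 + m t * (x t / ‖P t‖))) t := fun t => by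
    have h1 : HasDerivAt (fun t => inner ℝ (Q t) u)
        (inner ℝ ((√(1 + ‖P t‖ ^ 2))⁻¹ • P t) u) t := by
      simpa using (hQ t).inner ℝ (hasDerivAt_const t u)
    have h2 := ((hasDerivAt_id t).fun_add (h1.const_mul β)).const_mul C
    refine h2.congr_deriv ?_
    rw [real_inner_smul_left]
    rcases eq_or_ne (P t) 0 with h0 | h0
    · simp [hm, hxdef, h0]
    · have : ‖P t‖ ≠ 0 := norm_ne_zero_iff.2 h0
      simp only [hm, hxdef]
      field_simp
  have hKmono : Monotone K := by
    refine monotone_of_hasDerivAt_nonneg hKd fun t => mul_nonneg hC ?_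
    have h1 : |x t / ‖P t‖| ≤ 1 := by
      rw [abs_div, abs_norm]
      refine div_le_one_of_le₀ ?_ (norm_nonneg _)
      simpa [hu] using abs_real_inner_le_norm (P t) u
    have h2 : |m t * (x t / ‖P t‖)| ≤ 1 := by
      rw [abs_mul, abs_of_nonneg (hm0 t)]
      exact mul_le_one₀ (hmb t).2.1 (abs_nonneg _) h1
    linarith [neg_abs_le (m t * (x t / ‖P t‖))]
  have hPc : Continuous P := continuous_iff_continuousAt.2 fun t => (hP t).continuousAt
  have hKc : Continuous K := continuous_iff_continuousAt.2 fun t => (hKd t).continuousAt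
  have hxc : Continuous x := by fun_prop
  have hx₀ : x t₀ = M := by
    simp [hxdef, h₀, real_inner_smul_left, hu]
  have hr₀ : ‖P t₀‖ = M := by
    rw [h₀, norm_smul, hu, mul_one, Real.norm_eq_abs, abs_of_pos hM]
  obtain ⟨τ, ⟨⟨hτ0, hτ1⟩, hτx⟩, hτmin⟩ :
      ∃ τ, IsLeast (Set.Icc t₀ t₁ ∩ {t | x t ≤ 0}) τ :=
    (isCompact_Icc.inter_right (isClosed_le hxc continuous_const)).exists_isLeast
      ⟨t₁, ⟨h01, le_rfl⟩, h₁⟩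
  have hxpos : ∀ t ∈ Set.Ico t₀ τ, 0 < x t := fun t ht => by
    by_contra! hneg
    exact absurd (hτmin ⟨⟨ht.1, ht.2.le.trans hτ1⟩, hneg⟩) (not_le.2 ht.2)
  have main : ∀ N, M < N → 2 / 5 * M + 1 / 10 * M ^ 2 / N ≤ K t₁ - K t₀ := by
    intro N hMN
    have hN : 0 < N := hM.trans hMN
    have hrN : ∀ t, ‖P t‖ / N ≤ m t := fun t =>
      le_trans (by gcongr) (hmb t).1
    have hbar := min_le_min_of_active_deriv_nonneg hτ0
      (f := fun t => 2 / 5 * x t + 1 / 10 * x t ^ 2 / N + K t)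
      (g := fun t => (‖P t‖ + x t - √(‖P t‖ ^ 2 - x t ^ 2)) / 4 + K t)
      (f' := fun t => (2 / 5 + 1 / 5 * x t / N) * inner ℝ (e t + b t) u +
        C * (1 + m t * (x t / ‖P t‖)))
      (g' := fun t => (inner ℝ (e t + b t) (P t) / ‖P t‖ + inner ℝ (e t + b t) u -
        (inner ℝ (e t + b t) (P t) - x t * inner ℝ (e t + b t) u) /
          √(‖P t‖ ^ 2 - x t ^ 2)) / 4 + C * (1 + m t * (x t / ‖P t‖)))
      (by fun_prop) (by fun_prop) ?_ ?_
    · have hend : 2 / 5 * x τ + 1 / 10 * x τ ^ 2 / N ≤ 0 := by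
        have h1 : -N ≤ x τ := by
          have h2 := abs_real_inner_le_norm (P τ) u
          rw [hu, mul_one] at h2
          linarith [neg_abs_le (x τ), hPM τ]
        have h3 : 2 / 5 * x τ + 1 / 10 * x τ ^ 2 / N =
            x τ * ((4 * N + x τ) / (10 * N)) := by field_simp; ring
        rw [h3]
        exact mul_nonpos_of_nonpos_of_nonneg hτx (div_nonneg (by linarith) (by positivity))
      have hstart : 2 / 5 * M + 1 / 10 * M ^ 2 / N ≤ M / 2 := by
        have : M ^ 2 / N ≤ M := by rw [div_le_iff₀ hN]; nlinarith
        rw [mul_div_assoc]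
        linarith
      simp only [hx₀, hr₀, sub_self, Real.sqrt_zero] at hbar
      rw [min_eq_left (by linarith)] at hbar
      linarith [hbar.trans (min_le_left _ _), hKmono hτ1]
    · intro t ht hle
      refine ⟨?_, linear_barrier_deriv_nonneg hC hu (he t) (hbP t) (hb t) (hmb t).2.2 (hm0 t)
        (hmb t).2.1 hN (hrN t) (hxpos t ht) (by simpa using hle)⟩
      have h1 := (((hxd t).const_mul (2 / 5)).fun_add
        ((((hxd t).fun_pow 2).const_mul (1 / 10)).div_const N)).fun_add (hKd t)
      refine h1.congr_deriv ?_
      push_cast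
      ring
    · intro t ht hle
      have hx := hxpos t ht
      have hP0 : P t ≠ 0 := by
        intro h0
        simp [hxdef, h0] at hx
      have hr : 0 < ‖P t‖ := norm_pos_iff.2 hP0
      have hle' : (‖P t‖ + x t - √(‖P t‖ ^ 2 - x t ^ 2)) / 4 ≤
          2 / 5 * x t + 1 / 10 * x t ^ 2 / N := by simpa using hle
      have hy2 : 0 < ‖P t‖ ^ 2 - x t ^ 2 := by
        by_contra! hneg
        rw [Real.sqrt_eq_zero_of_nonpos hneg] at hle'
        have h1 : x t ≤ ‖P t‖ := by
          simpa [hu] using (le_abs_self _).trans (abs_real_inner_le_norm (P t) u)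
        have h2 : x t ^ 2 / N < x t := by
          rw [div_lt_iff₀ hN]
          nlinarith [hPM t]
        rw [mul_div_assoc] at hle'
        linarith
      refine ⟨?_, conic_barrier_deriv_nonneg hC hu (he t) (hbP t) (hb t) (hmb t).2.2 (hm0 t)
        (hmb t).2.1 (hrN t) hx (Real.sqrt_pos.2 hy2) hle'⟩
      have hn2 := (hP t).norm_sq
      have hn : HasDerivAt (fun t => ‖P t‖) (inner ℝ (e t + b t) (P t) / ‖P t‖) t := by
        have h1 := hn2.sqrt (by positivity)
        simp only [Real.sqrt_sq (norm_nonneg _)] at h1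
        refine h1.congr_deriv ?_
        rw [real_inner_comm]
        field_simp
      have hy := (hn2.fun_sub ((hxd t).fun_pow 2)).sqrt hy2.ne'
      have h1 := (((hn.fun_add (hxd t)).fun_sub hy).div_const 4).fun_add (hKd t)
      refine h1.congr_deriv ?_
      have hs : √(‖P t‖ ^ 2 - x t ^ 2) ≠ 0 := (Real.sqrt_pos.2 hy2).ne'
      rw [real_inner_comm (P t)]
      field_simp
      ring
  have hgoal : C * (t₁ - t₀ + β * (inner ℝ (Q t₁) u - inner ℝ (Q t₀) u)) = K t₁ - K t₀ := by
    simp only [hK]; ring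
  rw [hgoal]
  by_contra! hlt
  set δ := M / 2 - (K t₁ - K t₀) with hδ
  have hδ0 : 0 < δ := by linarith
  have h1 := main (M + δ) (by linarith)
  have h2 : M - δ ≤ M ^ 2 / (M + δ) := by
    rw [le_div_iff₀ (by linarith)]
    nlinarith [sq_nonneg δ]
  rw [mul_div_assoc] at h1
  linarith

end Barrier

/-- The momentum of a periodic solution of the abstract relativistic system is bounded by `T C`. -/
lemma norm_momentum_le {E : Type*} [NormedAddCommGroup E] [InnerProductSpace ℝ E]
    {P Q e b : ℝ → E} {C T : ℝ} (hT : 0 < T) (hC : 0 ≤ C)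
    (hPper : Function.Periodic P T) (hQper : Function.Periodic Q T)
    (hP : ∀ t, HasDerivAt P (e t + b t) t)
    (hQ : ∀ t, HasDerivAt Q ((√(1 + ‖P t‖ ^ 2))⁻¹ • P t) t)
    (he : ∀ t, ‖e t‖ ≤ 2 * C) (hbP : ∀ t, inner ℝ (b t) (P t) = 0)
    (hb : ∀ t, ‖b t‖ ≤ 2 * C * (‖P t‖ / √(1 + ‖P t‖ ^ 2))) (t : ℝ) :
    ‖P t‖ ≤ T * C := by
  have hPc : Continuous P := continuous_iff_continuousAt.2 fun t => (hP t).continuousAt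
  obtain ⟨t₀, -, hmax⟩ := isCompact_Icc.exists_isMaxOn (Set.nonempty_Icc.2 hT.le)
    (hPc.norm.continuousOn (s := Set.Icc 0 T))
  have hPM : ∀ t, ‖P t‖ ≤ ‖P t₀‖ := fun t => by
    obtain ⟨s, hs, hts⟩ := hPper.exists_mem_Ico₀ hT t
    rw [hts]
    exact hmax ⟨hs.1, hs.2.le⟩
  refine (hPM t).trans ?_
  rcases (norm_nonneg (P t₀)).eq_or_lt with h0 | hM
  · rw [← h0]; positivity
  set M := ‖P t₀‖ with hMdef
  set u := M⁻¹ • P t₀ with hu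
  have hu1 : ‖u‖ = 1 := by
    rw [hu, norm_smul, norm_inv, Real.norm_eq_abs, abs_of_pos hM, ← hMdef, inv_mul_cancel₀ hM.ne']
  have hPu : P t₀ = M • u := by rw [hu, smul_inv_smul₀ hM.ne']
  have hQu : ∀ t, HasDerivAt (fun t => inner ℝ (Q t) u)
      ((√(1 + ‖P t‖ ^ 2))⁻¹ * inner ℝ (P t) u) t := fun t => by
    simpa [real_inner_smul_left] using (hQ t).inner ℝ (hasDerivAt_const t u)
  obtain ⟨t₁, ⟨h01, h1T⟩, hd⟩ := exists_hasDerivAt_eq_zero (a := t₀) (b := t₀ + T) (by linarith)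
    (fun t _ => (hQu t).continuousAt.continuousWithinAt) (by simp only [hQper t₀])
    (fun t _ => hQu t)
  have hx₁ : inner ℝ (P t₁) u = 0 := by
    refine (mul_eq_zero.1 hd).resolve_left ?_
    positivity
  have hfwd := half_max_momentum_le hC hM hu1 hP hQ he hbP hb hPM hPu h01.le hx₁.le
  have hbwd := half_max_momentum_le (P := fun t => P (-t)) (Q := fun t => -Q (-t))
    (e := fun t => -e (-t)) (b := fun t => -b (-t)) (t₀ := -(t₀ + T)) (t₁ := -t₁) hC hM hu1
    (fun t => by
      have := (hP (-t)).scomp t (hasDerivAt_neg t)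
      refine this.congr_deriv ?_
      module)
    (fun t => by
      have := ((hQ (-t)).scomp t (hasDerivAt_neg t)).neg
      refine this.congr_deriv ?_
      module)
    (fun t => by simpa using he (-t)) (fun t => by simpa using hbP (-t))
    (fun t => by simpa using hb (-t)) (fun t => hPM _)
    (by simpa only [neg_neg, hPper t₀] using hPu) (by linarith) (by simp [hx₁])
  simp only [neg_neg, hQper t₀, inner_neg_left] at hbwd
  linarith

lemma cross3_curl3 (A : EuclideanSpace ℝ (Fin 3) → EuclideanSpace ℝ (Fin 3))
    (x v : EuclideanSpace ℝ (Fin 3)) :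
    cross3 v (curl3 A x) =
      ContinuousLinearMap.adjoint (fderiv ℝ A x) v - fderiv ℝ A x v := by
  set L := fderiv ℝ A x with hL
  have hv : v = ∑ j, v j • EuclideanSpace.single j (1 : ℝ) := by
    ext i
    simp [Finset.sum_apply, Pi.single_apply]
  have hLv : L v = ∑ j, v j • L (EuclideanSpace.single j (1 : ℝ)) := by
    conv_lhs => rw [hv]
    simp
  have hadj : ∀ i, ContinuousLinearMap.adjoint L v i =
      ∑ j, v j * L (EuclideanSpace.single i (1 : ℝ)) j := by
    intro i
    have h1 := ContinuousLinearMap.adjoint_inner_right L (EuclideanSpace.single i (1 : ℝ)) v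
    rw [EuclideanSpace.inner_single_left] at h1
    simpa [PiLp.inner_apply] using h1
  ext i
  rw [PiLp.sub_apply, hadj, hLv]
  fin_cases i <;> simp [cross3, curl3, Fin.sum_univ_three, ← hL] <;> ring

lemma inner_cross3_self (u v : EuclideanSpace ℝ (Fin 3)) : inner ℝ (cross3 u v) u = 0 := by
  simp [cross3, PiLp.inner_apply, Fin.sum_univ_three]
  ring

/-- Every `T`-periodic solution of the relativistic Hamiltonian system associated with the
Lorentz force equation satisfies the uniform velocity bound `|q̇| ≤ TC/√(1+T²C²) < 1`. -/
theorem stmt11 (T : ℝ) (hT : 0 < T)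
    (A : ℝ → EuclideanSpace ℝ (Fin 3) → EuclideanSpace ℝ (Fin 3))
    (Φ : ℝ → EuclideanSpace ℝ (Fin 3) → ℝ)
    (hA : ContDiff ℝ 1 fun p : ℝ × EuclideanSpace ℝ (Fin 3) => A p.1 p.2)
    (hΦ : ∀ t, Differentiable ℝ (Φ t))
    (C : ℝ)
    (hC₁ : ∀ t x, ‖deriv (fun s => A s x) t‖ ≤ C)
    (hC₂ : ∀ t x, ‖fderiv ℝ (A t) x‖ ≤ C)
    (hC₃ : ∀ t x, ‖gradient (Φ t) x‖ ≤ C)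
    (q p : ℝ → EuclideanSpace ℝ (Fin 3))
    (hqper : Function.Periodic q T) (hpper : Function.Periodic p T)
    (hqd : Differentiable ℝ q) (hpd : Differentiable ℝ p)
    (heq1 : ∀ t, deriv q t = (Real.sqrt (1 + ‖p t‖ ^ 2))⁻¹ • p t)
    (heq2 : ∀ t, deriv p t =
      -gradient (Φ t) (q t) - deriv (fun s => A s (q t)) t +
        cross3 (deriv q t) (curl3 (A t) (q t))) :
    (∀ t, ‖deriv q t‖ ≤ T * C / Real.sqrt (1 + T ^ 2 * C ^ 2)) ∧
      T * C / Real.sqrt (1 + T ^ 2 * C ^ 2) < 1 := by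
  have hC : 0 ≤ C := (norm_nonneg _).trans (hC₂ 0 0)
  have hspeed : ∀ t, ‖deriv q t‖ = ‖p t‖ / √(1 + ‖p t‖ ^ 2) := fun t => by
    rw [heq1, norm_smul, norm_inv, Real.norm_eq_abs, abs_of_nonneg (Real.sqrt_nonneg _),
      inv_mul_eq_div]
  have hp : ∀ t, ‖p t‖ ≤ T * C := by
    refine norm_momentum_le hT hC hpper hqper
      (e := fun t => -gradient (Φ t) (q t) - deriv (fun s => A s (q t)) t)
      (b := fun t => cross3 (deriv q t) (curl3 (A t) (q t)))
      (fun t => heq2 t ▸ (hpd t).hasDerivAt) (fun t => heq1 t ▸ (hqd t).hasDerivAt)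
      (fun t => ?_) (fun t => ?_) (fun t => ?_)
    · refine (norm_sub_le _ _).trans ?_
      rw [norm_neg]
      linarith [hC₁ t (q t), hC₃ t (q t)]
    · have h1 := inner_cross3_self (deriv q t) (curl3 (A t) (q t))
      nth_rw 2 [heq1] at h1
      rw [real_inner_smul_right] at h1
      exact (mul_eq_zero.1 h1).resolve_left (by positivity)
    · rw [cross3_curl3, ← hspeed]
      exact norm_adjoint_sub_le _ _ (hC₂ t (q t))
  have hTC : 0 ≤ T * C := by positivity
  rw [← mul_pow]
  generalize T * C = K at hp hTC ⊢
  refine ⟨fun t => ?_, ?_⟩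
  · rw [hspeed, div_le_div_iff₀ (by positivity) (by positivity)]
    refine (sq_le_sq₀ (by positivity) (by positivity)).1 ?_
    rw [mul_pow, mul_pow, Real.sq_sqrt (by positivity), Real.sq_sqrt (by positivity)]
    nlinarith [pow_le_pow_left₀ (norm_nonneg _) (hp t) 2]
  · rw [div_lt_one (by positivity)]
    exact Real.lt_sqrt_of_sq_lt (by linarith)

end
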